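/- arXiv:math/0610579 — 2 statements merged into one kernel-verified Lean document; each statement's English description precedes it below -/
import Mathlib

section
/- The relation (3.2) in central extensions of matrix Lie algebras: let N ≥ 4, let W be a Lie algebra over K, let M be the Lie algebra of N×N matrices over 𝒜 with the commutator bracket, and let φ : W → M be a morphism of Lie K-algebras whose kernel is contained in the center of W. Let i, j, k, l ∈ {1, …, N} be pairwise distinct, let a, b, c ∈ 𝒜, and suppose x₁, x₂, x₃, x₄ ∈ W satisfy φ(x₁) = E_ik(a), φ(x₂) = E_kj(bc), φ(x₃) = E_il(ab), φ(x₄) = E_lj(c). Then ⁅x₁, x₂⁆ = ⁅x₃, x₄⁆, provided also that E_kl(b) and E_lj(c) lie in the range of φ. -/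
open Matrix

attribute [local instance 100] LieRing.ofAssociativeRing

/-- relation (3.2) in central extensions of matrix Lie algebras.
Let `N ≥ 4`, let `φ : W → M_N(𝒜)` (matrices with the commutator bracket) be a
morphism of Lie `K`-algebras whose kernel lies in the center of `W`, let
`i, j, k, l` be pairwise distinct, and suppose `φ(x₁) = E_ik(a)`,
`φ(x₂) = E_kj(bc)`, `φ(x₃) = E_il(ab)`, `φ(x₄) = E_lj(c)`, with `E_kl(b)` and
`E_lj(c)` in the range of `φ`.  Then `⁅x₁, x₂⁆ = ⁅x₃, x₄⁆`. -/
theorem central_extension_relation_3_2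
    (K : Type*) [Field K] (h2 : (2 : K) ≠ 0) (h3 : (3 : K) ≠ 0)
    (A : Type*) [Ring A] [Algebra K A]
    (N : ℕ) (hN : 4 ≤ N)
    (W : Type*) [LieRing W] [LieAlgebra K W]
    (φ : W →ₗ⁅K⁆ Matrix (Fin N) (Fin N) A)
    (hc : ∀ z : W, φ z = 0 → ∀ y : W, ⁅z, y⁆ = 0)
    (i j k l : Fin N)
    (hij : i ≠ j) (hik : i ≠ k) (hil : i ≠ l)
    (hjk : j ≠ k) (hjl : j ≠ l) (hkl : k ≠ l)
    (a b c : A) (x₁ x₂ x₃ x₄ : W)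
    (hx₁ : φ x₁ = single i k a)
    (hx₂ : φ x₂ = single k j (b * c))
    (hx₃ : φ x₃ = single i l (a * b))
    (hx₄ : φ x₄ = single l j c)
    (hrange₁ : single k l b ∈ Set.range φ)
    (hrange₂ : single l j c ∈ Set.range φ) :
    ⁅x₁, x₂⁆ = ⁅x₃, x₄⁆ := by
  obtain ⟨y, hy⟩ := hrange₁
  have e2 : φ (x₂ - ⁅y, x₄⁆) = 0 := by
    rw [map_sub, LieHom.map_lie, hx₂, hy, hx₄, Ring.lie_def, single_mul_single_same,
      single_mul_single_of_ne _ _ _ _ hjk]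
    simp
  have e3 : φ (x₃ - ⁅x₁, y⁆) = 0 := by
    rw [map_sub, LieHom.map_lie, hx₃, hy, hx₁, Ring.lie_def, single_mul_single_same,
      single_mul_single_of_ne _ _ _ _ hil.symm]
    simp
  have e4 : φ ⁅x₁, x₄⁆ = 0 := by
    rw [LieHom.map_lie, hx₁, hx₄, Ring.lie_def, single_mul_single_of_ne _ _ _ _ hkl,
      single_mul_single_of_ne _ _ _ _ hij.symm]
    simp
  have f2 : ⁅x₁, x₂⁆ = ⁅x₁, ⁅y, x₄⁆⁆ := by
    have h := hc _ e2 x₁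
    rw [← lie_skew, neg_eq_zero, lie_sub] at h
    exact sub_eq_zero.mp h
  have f3 : ⁅x₃, x₄⁆ = ⁅⁅x₁, y⁆, x₄⁆ := by
    have h := hc _ e3 x₄
    rw [sub_lie] at h
    exact sub_eq_zero.mp h
  have f4 : ⁅y, ⁅x₁, x₄⁆⁆ = 0 := by
    rw [← lie_skew, hc _ e4 y, neg_zero]
  rw [f2, f3, leibniz_lie, f4, add_zero]
end

section
/- The key vanishing for rank 4 with char K ≠ 2: let K be a field with char K ≠ 2, let N ≥ 4, let W be a Lie algebra over K, let M be the Lie algebra of N×N matrices over 𝒜 with the commutator bracket, and let φ : W → M be a morphism of Lie K-algebras whose kernel is contained in the center of W and whose range contains every elementary matrix E_pq(x) with p ≠ q and x ∈ 𝒜. Then for pairwise distinct indices i, j, k, l ∈ {1, …, N}, all a, b ∈ 𝒜, and any e₁, e₂ ∈ W with φ(e₁) = E_ij(a) and φ(e₂) = E_kl(b), one has ⁅e₁, e₂⁆ = 0. -/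
open Matrix

attribute [local instance 100] LieRing.ofAssociativeRing

/-- the key vanishing for rank 4 with `char K ≠ 2`.  Let `N ≥ 4`,
let `φ : W → M_N(𝒜)` (matrices with the commutator bracket) be a morphism of Lie
`K`-algebras whose kernel lies in the center of `W` and whose range contains every
elementary matrix `E_pq(x)` with `p ≠ q`.  Then for pairwise distinct indices
`i, j, k, l` and any preimages `e₁, e₂` of `E_ij(a)`, `E_kl(b)`, one has
`⁅e₁, e₂⁆ = 0`. -/
theorem central_extension_disjoint_bracket_eq_zero
    (K : Type*) [Field K] (h2 : (2 : K) ≠ 0)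
    (A : Type*) [Ring A] [Algebra K A]
    (N : ℕ) (hN : 4 ≤ N)
    (W : Type*) [LieRing W] [LieAlgebra K W]
    (φ : W →ₗ⁅K⁆ Matrix (Fin N) (Fin N) A)
    (hc : ∀ z : W, φ z = 0 → ∀ y : W, ⁅z, y⁆ = 0)
    (hrange : ∀ p q : Fin N, p ≠ q → ∀ x : A, Matrix.single p q x ∈ Set.range φ)
    (i j k l : Fin N)
    (hij : i ≠ j) (hik : i ≠ k) (hil : i ≠ l)
    (hjk : j ≠ k) (hjl : j ≠ l) (hkl : k ≠ l)
    (a b : A) (e₁ e₂ : W)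
    (he₁ : φ e₁ = Matrix.single i j a)
    (he₂ : φ e₂ = Matrix.single k l b) :
    ⁅e₁, e₂⁆ = 0 := by
  obtain ⟨u, hu⟩ := hrange i j hij 1
  obtain ⟨v, hv⟩ := hrange j i hij.symm 1
  have hc' : ∀ z : W, φ z = 0 → ∀ y : W, ⁅y, z⁆ = 0 := by
    intro z hz y
    rw [← lie_skew, hc z hz y, neg_zero]
  have h1 : ⁅⁅⁅u, v⁆, e₁⁆ - (2 : ℕ) • e₁, e₂⁆ = 0 := by
    apply hc
    rw [map_sub, map_nsmul, LieHom.map_lie, LieHom.map_lie, hu, hv, he₁]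
    simp [LieRing.of_associative_ring_bracket, sub_mul, mul_sub, hij.symm]
    rw [two_mul, Matrix.single_add, sub_self]
  have h3 : ⁅e₁, ⁅⁅u, v⁆, e₂⁆⁆ = 0 := by
    apply hc'
    rw [LieHom.map_lie, LieHom.map_lie, hu, hv, he₂]
    simp [LieRing.of_associative_ring_bracket, sub_mul, mul_sub, hik, hjk, hil.symm, hjl.symm]
  have h4 : ⁅⁅u, v⁆, ⁅e₁, e₂⁆⁆ = 0 := by
    apply hc'
    rw [LieHom.map_lie, he₁, he₂]
    simp [LieRing.of_associative_ring_bracket, hjk, hil.symm]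
  rw [leibniz_lie, h3, add_zero] at h4
  rw [sub_lie, h4, zero_sub, neg_eq_zero, nsmul_lie] at h1
  have h5 : (2 : K) • ⁅e₁, e₂⁆ = 0 := by
    rw [two_smul, ← two_nsmul, h1]
  exact (smul_eq_zero.mp h5).resolve_left h2
end
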